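/- The smallest dimension of a faithful complex linear representation of the symmetric group 𝔖ₙ (n ≥ 5, or more simply n ≥ 2 with appropriate care) is n − 1. In particular, 𝔖ₙ has no faithful representation of dimension less than n − 1 for n ≥ 5. -/

import Mathlib

/-!
STATEMENT 13: For `n ≥ 5`, the smallest dimension of a faithful complex linear
representation of the symmetric group `𝔖ₙ` is `n − 1`: there is no faithful representation
of dimension `< n − 1`, and the bound is achieved (by the standard representation).
-/

open Matrix

/-- Restriction of a monoid action by linear maps to an invariant submodule. -/
def restrictEnd {G V : Type} [Monoid G] [AddCommGroup V] [Module ℂ V] (ρ : G →* Module.End ℂ V)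
    (W : Submodule ℂ V) (h : ∀ g, ∀ v ∈ W, ρ g v ∈ W) : G →* Module.End ℂ W where
  toFun g := (ρ g).restrict (h g)
  map_one' := by ext v; simp
  map_mul' x y := by ext v; simp

theorem refl_rank_one {V : Type} [AddCommGroup V] [Module ℂ V] [FiniteDimensional ℂ V]
    (S : Module.End ℂ V) (h : Module.finrank ℂ (LinearMap.range (S - 1)) ≤ 1) :
    ∃ (f : V →ₗ[ℂ] ℂ) (a : V), ∀ v, S v = v - f v • a := by
  obtain ⟨u, hu⟩ := finrank_le_one_iff.mp h
  by_cases hu0 : u = 0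
  · refine ⟨0, 0, fun v => ?_⟩
    obtain ⟨c, hc⟩ := hu ⟨(S - 1) v, LinearMap.mem_range_self _ v⟩
    have := congrArg Subtype.val hc
    simp [hu0] at this
    simp
    exact (sub_eq_zero.mp this.symm)
  · obtain ⟨g, hg⟩ := Module.Projective.exists_dual_ne_zero ℂ hu0
    refine ⟨-((g u)⁻¹ • (g.comp (S - 1).rangeRestrict)), u, fun v => ?_⟩
    obtain ⟨c, hc⟩ := hu ((S - 1).rangeRestrict v)
    have h1 := congrArg Subtype.val hc
    have h2 := congrArg g hc
    simp at h1 h2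
    simp [← h2]
    rw [mul_comm, mul_assoc, mul_inv_cancel₀ hg, mul_one, h1]
    abel

section refl
variable {V : Type} [AddCommGroup V] [Module ℂ V] {S T : Module.End ℂ V}
  {f g : V →ₗ[ℂ] ℂ} {a b : V}

theorem refl_two (hS : ∀ v, S v = v - f v • a) (h2 : S * S = 1) (h1 : S ≠ 1) : f a = 2 := by
  by_contra hne
  apply h1
  ext v
  have := LinearMap.congr_fun h2 v
  simp only [Module.End.mul_apply, Module.End.one_apply, hS, map_sub, map_smul, smul_eq_mul] at this
  have h3 : (2 - f a) • (f v • a) = 0 := by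
    linear_combination (norm := module) (-1 : ℂ) • this
  rcases smul_eq_zero.mp h3 with h | h
  · exact absurd (sub_eq_zero.mp h).symm hne
  · simp [hS, h]

theorem refl_comm (hS : ∀ v, S v = v - f v • a) (hT : ∀ v, T v = v - g v • b)
    (hf : f a = 2) (hg : g b = 2) (hc : S * T = T * S) (hne : S ≠ T) : f b = 0 := by
  by_contra h0
  apply hne
  have key : ∀ v, (g v * f b) • a = (f v * g a) • b := by
    intro v
    have := LinearMap.congr_fun hc v
    simp only [Module.End.mul_apply, hS, hT, map_sub, map_smul, smul_eq_mul] at this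
    linear_combination (norm := module) this
  have k1 : (2 : ℂ) • a = g a • b := by
    have := key b
    rw [hg] at this
    have h3 : (f b) • ((2 : ℂ) • a - g a • b) = 0 := by
      linear_combination (norm := module) this
    rcases smul_eq_zero.mp h3 with h | h
    · exact absurd h h0
    · exact sub_eq_zero.mp h
  have k2 : (4 : ℂ) = g a * f b := by
    have := congrArg f k1
    simp [hf] at this
    linear_combination this
  ext v
  rw [hS, hT]
  have k3 : g v * f b = 2 * f v := by
    have := congrArg f (key v)
    simp [hf] at this
    linear_combination this / 2 - f v * k2 / 2
  have k4 : f v • a = g v • b := by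
    have : (f b) • (f v • a - g v • b) = 0 := by
      have e1 : (f b * f v) • a = (f b * f v / 2) • ((2:ℂ) • a) := by
        rw [smul_smul]; congr 1; ring
      rw [smul_sub, smul_smul, e1, k1, smul_smul, smul_smul, ← sub_smul]
      rw [show f b * f v / 2 * g a - f b * g v = 0 by linear_combination -f v * k2/2 - k3]
      simp
    rcases smul_eq_zero.mp this with h | h
    · exact absurd h h0
    · exact sub_eq_zero.mp h
  rw [k4]

theorem refl_braid (hS : ∀ v, S v = v - f v • a) (hT : ∀ v, T v = v - g v • b)
    (hf : f a = 2) (hg : g b = 2) (hc : S * T * S = T * S * T) (hne : S ≠ T) :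
    f b * g a = 1 := by
  by_contra h0
  apply hne
  have key : ∀ v, (f v - g v * f b) • (a - g a • b) = (g v - f v * g a) • (b - f b • a) := by
    intro v
    have := LinearMap.congr_fun hc v
    simp only [Module.End.mul_apply, hS, hT, map_sub, map_smul, smul_eq_mul, hf, hg] at this
    linear_combination (norm := module) this
  have k1 : (2 : ℂ) • a = g a • b := by
    have := key a
    rw [hf] at this
    have h3 : (1 - f b * g a) • ((2 : ℂ) • a - g a • b) = 0 := by
      linear_combination (norm := module) this
    rcases smul_eq_zero.mp h3 with h | h
    · exact absurd (sub_eq_zero.mp h).symm h0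
    · exact sub_eq_zero.mp h
  have k2 : (4 : ℂ) = g a * f b := by
    have := congrArg f k1
    simp [hf] at this
    linear_combination this
  have hb0 : f b ≠ 0 := by
    intro h; rw [h] at k2; norm_num at k2
  ext v
  rw [hS, hT]
  have k3 : g v * f b = 2 * f v := by
    have := congrArg f (key v)
    simp [hf] at this
    linear_combination this / 3 + (g v * f b / 3 - 2 * f v / 3) * k2
  have k4 : f v • a = g v • b := by
    have : (f b) • (f v • a - g v • b) = 0 := by
      have e1 : (f b * f v) • a = (f b * f v / 2) • ((2:ℂ) • a) := by
        rw [smul_smul]; congr 1; ring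
      rw [smul_sub, smul_smul, e1, k1, smul_smul, smul_smul, ← sub_smul]
      rw [show f b * f v / 2 * g a - f b * g v = 0 by linear_combination -f v * k2/2 - k3]
      simp
    rcases smul_eq_zero.mp this with h | h
    · exact absurd h hb0
    · exact sub_eq_zero.mp h
  rw [k4]

end refl

theorem chain_indep {V : Type} [AddCommGroup V] [Module ℂ V] (m : ℕ) (f : ℕ → (V →ₗ[ℂ] ℂ)) (a : ℕ → V)
    (h2 : ∀ i < m, f i (a i) = 2)
    (h0 : ∀ i < m, ∀ j < m, (i + 1 < j ∨ j + 1 < i) → f i (a j) = 0)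
    (h1 : ∀ i, i + 1 < m → f i (a (i+1)) * f (i+1) (a i) = 1) :
    LinearIndependent ℂ (fun i : Fin m => a i) := by
  have key : ∀ k < m, ∃ g : V →ₗ[ℂ] ℂ, (∀ j < k, g (a j) = 0) ∧ g (a k) = (k+2)/(k+1) ∧
      (∀ j < m, k < j → g (a j) = f k (a j)) := by
    intro k
    induction k with
    | zero => intro hk; exact ⟨f 0, by simp, by simp [h2 0 hk], fun _ _ _ => rfl⟩
    | succ k ih =>
      intro hk
      obtain ⟨g, g1, g2, g3⟩ := ih (by omega)
      have hk1 : (k:ℂ) + 1 ≠ 0 := by exact_mod_cast Nat.succ_ne_zero k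
      have hk2 : (k:ℂ) + 2 ≠ 0 := by exact_mod_cast Nat.succ_ne_zero (k+1)
      have hk3 : (k:ℂ) + 1 + 1 ≠ 0 := by exact_mod_cast Nat.succ_ne_zero (k+1)
      refine ⟨f (k+1) - (f (k+1) (a k) * ((k+1)/(k+2))) • g, ?_, ?_, ?_⟩
      · intro j hj
        rcases Nat.lt_succ_iff_lt_or_eq.mp hj with h | rfl
        · simp [g1 j h, h0 (k+1) hk j (by omega) (by omega)]
        · simp [g2]; field_simp; simp
      · have := h1 k hk
        simp [g3 (k+1) hk (by omega), h2 _ hk]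
        field_simp
        linear_combination (-(k+1)*(k+1+1) : ℂ) * this
      · intro j hj hkj
        simp [g3 j hj (by omega), h0 k (by omega) j hj (by omega)]
  have : ∀ k ≤ m, LinearIndependent ℂ (fun i : Fin k => a i) := by
    intro k
    induction k with
    | zero => intro _; exact linearIndependent_empty_type
    | succ k ih =>
      intro hk
      rw [linearIndependent_finSucc']
      refine ⟨ih (by omega), ?_⟩
      obtain ⟨g, g1, g2, -⟩ := key k (by omega)
      intro hmem
      have hle : Submodule.span ℂ (Set.range (Fin.init fun i : Fin (k+1) => a i)) ≤ LinearMap.ker g := by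
        rw [Submodule.span_le]
        rintro _ ⟨i, rfl⟩
        simpa [Fin.init] using g1 i i.2
      have hh := hle hmem
      simp [g2] at hh
      rcases hh with h | h
      · have : (k:ℂ) + 2 ≠ 0 := by exact_mod_cast Nat.succ_ne_zero (k+1)
        exact this h
      · have : (k:ℂ) + 1 ≠ 0 := by exact_mod_cast Nat.succ_ne_zero k
        exact this h
  exact this m le_rfl

theorem perm_four {α : Type} (x y : Fin 4 → α) (hx : Function.Injective x)
    (hy : Function.Injective y) : ∃ σ : Equiv.Perm α, ∀ i, σ (x i) = y i := by
  have := Equiv.Perm.isMultiplyPretransitive α 4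
  obtain ⟨σ, h⟩ := MulAction.exists_smul_eq (Equiv.Perm α) (⟨x, hx⟩ : Fin 4 ↪ α) ⟨y, hy⟩
  exact ⟨σ, fun i => by simpa using DFunLike.congr_fun h i⟩

theorem inj_four {α : Type} {a b c d : α} (h : [a, b, c, d].Nodup) :
    Function.Injective ![a, b, c, d] := by
  have := List.nodup_iff_injective_get.mp h
  simp at h
  intro i j
  fin_cases i <;> fin_cases j <;> simp <;> grind

theorem rho_conj {α M : Type} [DecidableEq α] [Monoid M] (ρ : Equiv.Perm α →* M)
    (σ : Equiv.Perm α) {a b c d : α} (h : ρ (Equiv.swap a b) = ρ (Equiv.swap c d)) :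
    ρ (Equiv.swap (σ a) (σ b)) = ρ (Equiv.swap (σ c) (σ d)) := by
  simp only [Equiv.swap_apply_apply, map_mul, h]

/-- Distinct disjoint transpositions have different images, once one pair does. -/
theorem disj_ne {α M : Type} [DecidableEq α] [Monoid M] (ρ : Equiv.Perm α →* M)
    {a b c d : α} (hd : [a, b, c, d].Nodup) (h : ρ (Equiv.swap a b) ≠ ρ (Equiv.swap c d))
    {atwo btwo ctwo dtwo : α} (hdtwo : [atwo, btwo, ctwo, dtwo].Nodup) :
    ρ (Equiv.swap atwo btwo) ≠ ρ (Equiv.swap ctwo dtwo) := by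
  intro he
  obtain ⟨σ, hσ⟩ := perm_four _ _ (inj_four hdtwo) (inj_four hd)
  have h0 := hσ 0
  have h1 := hσ 1
  have h2 := hσ 2
  have h3 := hσ 3
  simp at h0 h1 h2 h3
  apply h
  rw [← h0, ← h1, ← h2, ← h3]
  exact rho_conj ρ σ he

theorem adj_ne {α M : Type} [DecidableEq α] [Monoid M] (ρ : Equiv.Perm α →* M)
    {a b c d : α} (hd : [a, b, c, d].Nodup) (h : ρ (Equiv.swap a b) ≠ ρ (Equiv.swap c d))
    {x y z : α} (hxy : x ≠ y) (hyz : y ≠ z) (hxz : x ≠ z) :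
    ρ (Equiv.swap x y) ≠ ρ (Equiv.swap y z) := by
  intro he
  have hw : ∃ w, w ≠ x ∧ w ≠ y ∧ w ≠ z := by
    have hc4 : ({a, b, c, d} : Finset α).card = 4 := by
      have := List.toFinset_card_of_nodup hd
      simpa using this
    have hc3 : ({x, y, z} : Finset α).card ≤ 3 := Finset.card_le_three
    obtain ⟨w, -, hw⟩ := Finset.exists_mem_notMem_of_card_lt_card (s := {x, y, z}) (t := {a, b, c, d})
      (by omega)
    exact ⟨w, by simpa using hw⟩
  obtain ⟨w, hwx, hwy, hwz⟩ := hw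
  -- conjugating x y z to y z w
  obtain ⟨σ, hσ⟩ := perm_four ![x, y, z, w] ![y, z, w, x] (inj_four (by simp; grind))
    (inj_four (by simp; grind))
  have h0 := hσ 0
  have h1 := hσ 1
  have h2 := hσ 2
  simp at h0 h1 h2
  have he2 := rho_conj ρ σ he
  rw [h0, h1, h2] at he2
  exact disj_ne ρ hd h (atwo := x) (btwo := y) (ctwo := z) (dtwo := w) (by simp; grind) (he.trans he2)

theorem swap_braid {α : Type} [DecidableEq α] {p q s : α} (A : p ≠ q) (C : q ≠ s) (B : p ≠ s) :
    Equiv.swap p q * Equiv.swap q s * Equiv.swap p q =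
      Equiv.swap q s * Equiv.swap p q * Equiv.swap q s := by
  ext w
  simp only [Equiv.Perm.mul_apply, Equiv.swap_apply_def]
  grind

theorem refl_case {n : ℕ} {V : Type} [AddCommGroup V] [Module ℂ V]
    [FiniteDimensional ℂ V] (ρ : Equiv.Perm (Fin n) →* Module.End ℂ V) {a b c d : Fin n}
    (hd : [a, b, c, d].Nodup) (h : ρ (Equiv.swap a b) ≠ ρ (Equiv.swap c d))
    (ε : ℂ) (hε : ε * ε = 1) {x y : Fin n} (hxy : x ≠ y)
    (hr : Module.finrank ℂ (LinearMap.range (ε • ρ (Equiv.swap x y) - 1)) ≤ 1) :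
    n ≤ Module.finrank ℂ V + 1 := by
  have hε0 : ε ≠ 0 := by rintro rfl; simp at hε
  have hsq : ∀ g : Equiv.Perm (Fin n), g * g = 1 → (ε • ρ g) * (ε • ρ g) = 1 := by
    intro g hg
    rw [smul_mul_smul_comm, hε, ← map_mul, hg, map_one, one_smul]
  -- all transpositions
  have hall : ∀ u v : Fin n, u ≠ v → ∃ (f : V →ₗ[ℂ] ℂ) (r : V), f r = 2 ∧
      ∀ w, (ε • ρ (Equiv.swap u v)) w = w - f w • r := by
    intro u v huv
    obtain ⟨f, r, hfr⟩ := refl_rank_one _ hr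
    obtain ⟨σ, hσ⟩ := isConj_iff.mp (Equiv.Perm.isConj_swap hxy huv)
    have hinv : ∀ w, ρ σ (ρ σ⁻¹ w) = w := by
      intro w
      rw [← Module.End.mul_apply, ← map_mul]; simp
    have hform : ∀ w, (ε • ρ (Equiv.swap u v)) w = w - (f.comp (ρ σ⁻¹)) w • (ρ σ r) := by
      intro w
      have h1 := hfr (ρ σ⁻¹ w)
      have h2 := congrArg (ρ σ) h1
      rw [← hσ]
      simpa [map_mul, hinv] using h2
    refine ⟨_, _, refl_two hform (hsq _ (by simp)) ?_, hform⟩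
    intro h1
    have hsc : ρ (Equiv.swap u v) = ε • 1 := by
      rw [← h1, smul_smul, hε, one_smul]
    have hcst : ∀ p q : Fin n, p ≠ q → ρ (Equiv.swap p q) = ε • 1 := by
      intro p q hpq
      obtain ⟨τ, hτ⟩ := isConj_iff.mp (Equiv.Perm.isConj_swap huv hpq)
      rw [← hτ, map_mul, map_mul, hsc]
      simp [← map_mul]
    simp at hd
    exact h ((hcst a b (by grind)).trans (hcst c d (by grind)).symm)
  have hex : ∀ i : ℕ, ∃ (f : V →ₗ[ℂ] ℂ) (r : V), ∀ hi : i + 1 < n, f r = 2 ∧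
      ∀ w, (ε • ρ (Equiv.swap (⟨i, by omega⟩ : Fin n) ⟨i+1, hi⟩)) w = w - f w • r := by
    intro i
    by_cases hi : i + 1 < n
    · obtain ⟨f, r, hf⟩ := hall ⟨i, by omega⟩ ⟨i+1, hi⟩ (by simp)
      exact ⟨f, r, fun _ => hf⟩
    · exact ⟨0, 0, fun h => absurd h hi⟩
  choose f r hfr using hex
  have hli := chain_indep (n-1) f r (fun i hi => (hfr i (by omega)).1) ?_ ?_
  · have := hli.fintype_card_le_finrank
    simp at this
    omega
  · intro i hi j hj hij
    obtain ⟨e1, e2⟩ := hfr i (by omega)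
    obtain ⟨e3, e4⟩ := hfr j (by omega)
    refine refl_comm e2 e4 e1 e3 ?_ ?_
    · rw [smul_mul_smul_comm, smul_mul_smul_comm, ← map_mul, ← map_mul]
      congr 2
      apply Equiv.Perm.Disjoint.commute
      rw [Equiv.Perm.disjoint_iff_disjoint_support, Equiv.Perm.support_swap (by simp),
        Equiv.Perm.support_swap (by simp)]
      simp [Finset.disjoint_left]
      omega
    · intro heq
      refine disj_ne ρ hd h (atwo := (⟨i, by omega⟩ : Fin n)) (btwo := ⟨i+1, by omega⟩)
        (ctwo := ⟨j, by omega⟩) (dtwo := ⟨j+1, by omega⟩) ?_ (smul_right_injective _ hε0 heq)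
      simp
      omega
  · intro i hi
    obtain ⟨e1, e2⟩ := hfr i (by omega)
    obtain ⟨e3, e4⟩ := hfr (i+1) (by omega)
    refine refl_braid e2 e4 e1 e3 ?_ ?_
    · simp only [smul_mul_smul_comm, ← map_mul]
      congr 2
      exact swap_braid (by simp) (by simp) (by simp; omega)
    · intro heq
      exact adj_ne ρ hd h (by simp) (by simp) (by simp; omega) (smul_right_injective _ hε0 heq)

theorem main_bound (n : ℕ) : ∀ (V : Type) [AddCommGroup V] [Module ℂ V]
    [FiniteDimensional ℂ V] (ρ : Equiv.Perm (Fin n) →* Module.End ℂ V) (a b c d : Fin n),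
    [a, b, c, d].Nodup → ρ (Equiv.swap a b) ≠ ρ (Equiv.swap c d) →
    n ≤ Module.finrank ℂ V + 1 := by
  induction n using Nat.strong_induction_on with
  | _ n ih =>
  intro V _ _ _ ρ a b c d hd h
  by_contra hlt
  have hpm : ∀ x y : Fin n, x ≠ y →
      Module.finrank ℂ (LinearMap.ker (ρ (Equiv.swap x y) - 1)) ≥ 2 ∧
      Module.finrank ℂ (LinearMap.ker (ρ (Equiv.swap x y) + 1)) ≥ 2 := by
    intro x y hxy
    have hsq : ∀ v, ρ (Equiv.swap x y) (ρ (Equiv.swap x y) v) = v := by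
      intro v
      rw [← Module.End.mul_apply, ← map_mul]; simp
    constructor
    · by_contra! hh
      apply hlt
      refine refl_case ρ hd h (-1) (by norm_num) hxy (le_trans (Submodule.finrank_mono ?_)
        (Nat.le_of_lt_succ hh))
      rintro _ ⟨v, rfl⟩
      simp [hsq]
      abel
    · by_contra! hh
      apply hlt
      refine refl_case ρ hd h 1 (by norm_num) hxy (le_trans (Submodule.finrank_mono ?_)
        (Nat.le_of_lt_succ hh))
      rintro _ ⟨v, rfl⟩
      simp [hsq]
  have hsum : ∀ x y : Fin n, 
      Module.finrank ℂ (LinearMap.ker (ρ (Equiv.swap x y) - 1)) +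
      Module.finrank ℂ (LinearMap.ker (ρ (Equiv.swap x y) + 1)) ≤ Module.finrank ℂ V := by
    intro x y
    apply Submodule.finrank_add_finrank_le_of_disjoint
    rw [Submodule.disjoint_def]
    intro v h1 h2
    simp at h1 h2
    rw [sub_eq_zero.mp h1] at h2
    rw [← two_smul ℂ v] at h2
    simpa using h2
  have hd2 := hd
  simp at hd2
  -- n ≥ 6
  have hn6 : 6 ≤ n := by
    have := hpm a b (by grind)
    have := hsum a b
    omega
  obtain ⟨m, rfl⟩ : ∃ m, n = m + 2 := ⟨n - 2, by omega⟩
  -- choose two points away from a, b, c, d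
  have hxy : ∃ x y : Fin (m+2), x ≠ y ∧ x ∉ ({a, b, c, d} : Finset (Fin (m+2))) ∧
      y ∉ ({a, b, c, d} : Finset (Fin (m+2))) := by
    have hcard : 1 < (({a, b, c, d} : Finset (Fin (m+2)))ᶜ).card := by
      have : ({a, b, c, d} : Finset (Fin (m+2))).card ≤ 4 := Finset.card_le_four
      rw [Finset.card_compl, Fintype.card_fin]
      omega
    obtain ⟨x, hx, y, hy, hxy⟩ := Finset.one_lt_card.mp hcard
    exact ⟨x, y, hxy, Finset.mem_compl.mp hx, Finset.mem_compl.mp hy⟩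
  obtain ⟨x, y, hxy, hx, hy⟩ := hxy
  simp at hx hy
  let p : Fin (m+2) → Prop := fun z => z ≠ x ∧ z ≠ y
  have hcp : Fintype.card {z // p z} = m := by
    have : Fintype.card {z // p z} = (({x, y} : Finset (Fin (m+2)))ᶜ).card := by
      rw [Fintype.card_subtype]
      congr 1
      ext z
      simp [p]
    rw [this, Finset.card_compl, Finset.card_pair hxy, Fintype.card_fin]
    omega
  let e : {z // p z} ≃ Fin m := Fintype.equivFinOfCardEq hcp
  let ι : Equiv.Perm (Fin m) →* Equiv.Perm (Fin (m+2)) :=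
    (Equiv.Perm.ofSubtype (p := p)).comp (e.symm.permCongrHom).toMonoidHom
  have hι : ∀ u v : {z // p z}, ι (Equiv.swap (e u) (e v)) = Equiv.swap (u : Fin (m+2)) v := by
    intro u v
    rw [← Equiv.Perm.ofSubtype_swap_eq]
    simp only [ι, MonoidHom.comp_apply]
    congr 1
    ext w
    simp [Equiv.permCongrHom, Equiv.swap_apply_def, ← Equiv.eq_symm_apply]
    split_ifs <;> simp
  have hcomm : ∀ g, ρ (Equiv.swap x y) * ρ (ι g) = ρ (ι g) * ρ (Equiv.swap x y) := by
    intro g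
    rw [← map_mul, ← map_mul, Equiv.mul_swap_eq_swap_mul]
    congr 2
    simp only [ι, MonoidHom.comp_apply]
    rw [Equiv.Perm.ofSubtype_apply_of_not_mem _ (by simp [p]),
      Equiv.Perm.ofSubtype_apply_of_not_mem _ (by simp [p])]
  have hcv : ∀ g v, ρ (Equiv.swap x y) (ρ (ι g) v) = ρ (ι g) (ρ (Equiv.swap x y) v) :=
    fun g v => LinearMap.congr_fun (hcomm g) v
  let A : {z // p z} := ⟨a, by grind⟩
  let B : {z // p z} := ⟨b, by grind⟩
  let C : {z // p z} := ⟨c, by grind⟩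
  let D : {z // p z} := ⟨d, by grind⟩
  have hnd : [e A, e B, e C, e D].Nodup := by
    simp [A, B, C, D]
    grind
  have hW : ∀ W : Submodule ℂ V, (∀ g, ∀ v ∈ W, ρ (ι g) v ∈ W) →
      Module.finrank ℂ W + 2 ≤ Module.finrank ℂ V →
      ∀ v ∈ W, ρ (Equiv.swap a b) v = ρ (Equiv.swap c d) v := by
    intro W hinv hfr v hv
    by_contra hne
    have := ih m (by omega) W (restrictEnd (ρ.comp ι) W hinv) (e A) (e B) (e C) (e D) hnd ?_
    · omega
    · intro heq
      have h1 := congrArg Subtype.val (LinearMap.congr_fun heq ⟨v, hv⟩)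
      simp [restrictEnd, hι] at h1
      exact hne h1
  have h12 := hpm x y hxy
  have hs := hsum x y
  have hsq : ∀ v, ρ (Equiv.swap x y) (ρ (Equiv.swap x y) v) = v := by
    intro v
    rw [← Module.End.mul_apply, ← map_mul]; simp
  have hP := hW (LinearMap.ker (ρ (Equiv.swap x y) - 1)) (by
    intro g v hv
    simp [hcv] at hv ⊢
    rw [← map_sub, hv, map_zero]) (by omega)
  have hM := hW (LinearMap.ker (ρ (Equiv.swap x y) + 1)) (by
    intro g v hv
    simp [hcv] at hv ⊢
    rw [← map_add, hv, map_zero]) (by omega)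
  apply h
  ext v
  have h1 := hP (v + ρ (Equiv.swap x y) v) (by simp [hsq]; abel)
  have h2 := hM (v - ρ (Equiv.swap x y) v) (by simp [hsq])
  rw [map_add, map_add] at h1
  rw [map_sub, map_sub] at h2
  linear_combination (norm := module) (1/2 : ℂ) • h1 + (1/2 : ℂ) • h2

/-- The permutation representation. -/
def permEnd (n : ℕ) : Equiv.Perm (Fin n) →* Module.End ℂ (Fin n → ℂ) where
  toFun σ := LinearMap.funLeft ℂ ℂ (σ⁻¹ : Equiv.Perm (Fin n))
  map_one' := by ext; simp
  map_mul' x y := by ext; simp [LinearMap.funLeft]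

theorem exists_std (n : ℕ) (hn : 5 ≤ n) :
    ∃ φ : Equiv.Perm (Fin n) →* GL (Fin (n - 1)) ℂ, Function.Injective φ := by
  let s : (Fin n → ℂ) →ₗ[ℂ] ℂ := ∑ i, LinearMap.proj i
  have hs : ∀ v, s v = ∑ i, v i := fun v => by simp [s]
  have hsurj : Function.Surjective s := by
    intro c
    refine ⟨Pi.single ⟨0, by omega⟩ c, ?_⟩
    rw [hs]; simp
  have hfr : Module.finrank ℂ (LinearMap.ker s) = n - 1 := by
    have h1 := s.finrank_range_add_finrank_ker
    rw [LinearMap.range_eq_top.mpr hsurj] at h1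
    simp at h1
    omega
  let bs := Module.finBasisOfFinrankEq ℂ (LinearMap.ker s) hfr
  have hinv : ∀ g, ∀ v ∈ LinearMap.ker s, permEnd n g v ∈ LinearMap.ker s := by
    intro g v hv
    rw [LinearMap.mem_ker, hs] at hv ⊢
    rw [← hv]
    exact Equiv.sum_comp (g⁻¹ : Equiv.Perm (Fin n)) v
  let ψ : Equiv.Perm (Fin n) →* Matrix (Fin (n-1)) (Fin (n-1)) ℂ :=
    ((LinearMap.toMatrixAlgEquiv bs : _ →* _)).comp (restrictEnd (permEnd n) _ hinv)
  refine ⟨ψ.toHomUnits, ?_⟩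
  rw [injective_iff_map_eq_one]
  intro σ hσ
  have h1 : ψ σ = 1 := by simpa using congrArg Units.val hσ
  have h2 : restrictEnd (permEnd n) _ hinv σ = 1 := by
    apply (LinearMap.toMatrixAlgEquiv bs).injective
    rw [map_one]
    exact h1
  ext1 i
  by_contra hi
  simp at hi
  have h3 := LinearMap.congr_fun h2 ⟨Pi.single i 1 - Pi.single (σ i) 1, by
    rw [LinearMap.mem_ker, hs]; simp⟩
  have h4 := congrFun (congrArg Subtype.val h3) (σ i)
  simp [restrictEnd, permEnd, LinearMap.funLeft, Pi.single_apply, hi, Ne.symm hi] at h4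
  norm_num at h4

theorem symmetricGroup_min_faithful_rep_dim (n : ℕ) (hn : 5 ≤ n) :
    (∀ (d : ℕ) (φ : Equiv.Perm (Fin n) →* GL (Fin d) ℂ),
        Function.Injective φ → n - 1 ≤ d) ∧
    ∃ φ : Equiv.Perm (Fin n) →* GL (Fin (n - 1)) ℂ, Function.Injective φ := by
  refine ⟨fun d φ hφ => ?_, exists_std n hn⟩
  let ρ : Equiv.Perm (Fin n) →* Module.End ℂ (Fin d → ℂ) :=
    (MonoidHomClass.toMonoidHom (Matrix.toLinAlgEquiv' : Matrix (Fin d) (Fin d) ℂ ≃ₐ[ℂ] _)).comp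
      ((Units.coeHom _).comp φ)
  have hρ : Function.Injective ρ := fun x y hxy =>
    hφ (Units.ext (Matrix.toLinAlgEquiv'.injective hxy))
  have := main_bound n (Fin d → ℂ) ρ ⟨0, by omega⟩ ⟨1, by omega⟩ ⟨2, by omega⟩ ⟨3, by omega⟩
    (by simp) (fun h => by
      have := congrArg (fun g : Equiv.Perm (Fin n) => g ⟨0, by omega⟩) (hρ h)
      simp [Equiv.swap_apply_def] at this)
  simp at this
  omega
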